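/- Suppose n ≥ 3, k ≥ 2 and the partition is balanced. Then with probability at least 1 − 2·n^{−2} over the choice of E, ‖E·ψ(G)‖_{2→∞} ≤ 10·(√(k·p·log n) + √(log n)). -/

import Mathlib

open MeasureTheory ProbabilityTheory Matrix Finset

namespace SBM

/-- Euclidean norm of a vector. -/
noncomputable def enorm {m : Type*} [Fintype m] (x : m → ℝ) : ℝ :=
  Real.sqrt (∑ i, x i ^ 2)

/-- Spectral (ℓ²-operator) norm of a matrix. -/
noncomputable def specNorm {n : ℕ} (A : Matrix (Fin n) (Fin n) ℝ) : ℝ :=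
  ‖Matrix.toEuclideanCLM (𝕜 := ℝ) A‖

/-- The `2 → ∞` norm: maximal Euclidean norm of a row. -/
noncomputable def n2i {n : ℕ} (A : Matrix (Fin n) (Fin n) ℝ) : ℝ :=
  ⨆ i : Fin n, enorm (A i)

/-- The mean matrix `G` of the SSBM with cluster assignment `cl`. -/
def meanMatrix (n k : ℕ) (p q : ℝ) (cl : Fin n → Fin k) : Matrix (Fin n) (Fin n) ℝ :=
  Matrix.of fun u v => if cl u = cl v then p else q

/-- The size of cluster `i`. -/
def clusterSize {n k : ℕ} (cl : Fin n → Fin k) (i : Fin k) : ℕ :=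
  (Finset.univ.filter fun v => cl v = i).card

/-- The partition is balanced: every cluster size is within a `1 ± 1/(16 log n)` factor
of `n / k`. -/
noncomputable def Balanced (n k : ℕ) (cl : Fin n → Fin k) : Prop :=
  ∀ i : Fin k,
    (1 - 1 / (16 * Real.log n)) * ((n : ℝ) / k) ≤ (clusterSize cl i : ℝ) ∧
    (clusterSize cl i : ℝ) ≤ (1 + 1 / (16 * Real.log n)) * ((n : ℝ) / k)

/-- `lam, v` is a spectral decomposition of `A`: eigenvalues in non-increasing order with
an orthonormal eigenbasis. -/
def IsSpectralDecomp {n : ℕ} (A : Matrix (Fin n) (Fin n) ℝ)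
    (lam : Fin n → ℝ) (v : Fin n → Fin n → ℝ) : Prop :=
  Antitone lam ∧
  (∀ i j, dotProduct (v i) (v j) = if i = j then (1 : ℝ) else 0) ∧
  A = ∑ i, lam i • Matrix.vecMulVec (v i) (v i)

/-- Orthogonal projection onto the span of the top `k` eigenvectors `v 0, …, v (k-1)`. -/
noncomputable def projTop {n : ℕ} (k : ℕ) (v : Fin n → Fin n → ℝ) :
    Matrix (Fin n) (Fin n) ℝ :=
  ∑ i ∈ Finset.univ.filter (fun i : Fin n => (i : ℕ) < k), Matrix.vecMulVec (v i) (v i)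

/-- The column of `A` indexed by `u`. -/
def column {n : ℕ} (A : Matrix (Fin n) (Fin n) ℝ) (u : Fin n) : Fin n → ℝ :=
  fun i => A i u

/-- `ψ(M) = A·M² + B·M` where `A = -1/(λ₁μ)`, `B = 1/λ₁ + 1/μ`. -/
noncomputable def psiM {n : ℕ} (lam1 mu : ℝ) (M : Matrix (Fin n) (Fin n) ℝ) :
    Matrix (Fin n) (Fin n) ℝ :=
  (-(1 / (lam1 * mu))) • (M * M) + (1 / lam1 + 1 / mu) • M

/-- `φ(M) = ψ(M)^r`. -/
noncomputable def phiM {n : ℕ} (lam1 mu : ℝ) (r : ℕ) (M : Matrix (Fin n) (Fin n) ℝ) :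
    Matrix (Fin n) (Fin n) ℝ :=
  psiM lam1 mu M ^ r

/-- `ψ(t) = A·t² + B·t` where `A = -1/(λ₁μ)`, `B = 1/λ₁ + 1/μ`. -/
noncomputable def psiR (lam1 mu t : ℝ) : ℝ :=
  (-(1 / (lam1 * mu))) * t ^ 2 + (1 / lam1 + 1 / mu) * t

/-- `φ(t) = ψ(t)^r`. -/
noncomputable def phiR (lam1 mu : ℝ) (r : ℕ) (t : ℝ) : ℝ := psiR lam1 mu t ^ r

end SBM

namespace SBM

/-- The SSBM noise model: `E` is a random symmetric matrix whose upper-triangular entries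
are independent, with `E_{uv} = 1 − G_{uv}` with probability `G_{uv}` and
`E_{uv} = −G_{uv}` with probability `1 − G_{uv}`, where `G` is the mean matrix. -/
def NoiseModel {Ω : Type*} [MeasureSpace Ω] {n k : ℕ} (p q : ℝ) (cl : Fin n → Fin k)
    (E : Ω → Matrix (Fin n) (Fin n) ℝ) : Prop :=
  (∀ ω, (E ω).IsSymm) ∧
  (∀ u v : Fin n, Measurable fun ω => E ω u v) ∧
  iIndepFun (m := fun _ : {e : Fin n × Fin n // e.1 ≤ e.2} => (inferInstance : MeasurableSpace ℝ))
    (fun e ω => E ω e.1.1 e.1.2) ℙ ∧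
  (∀ u v : Fin n, u ≤ v →
    Measure.map (fun ω => E ω u v) ℙ =
      ENNReal.ofReal (meanMatrix n k p q cl u v) •
        Measure.dirac (1 - meanMatrix n k p q cl u v) +
      ENNReal.ofReal (1 - meanMatrix n k p q cl u v) •
        Measure.dirac (-(meanMatrix n k p q cl u v)))

end SBM

/-! The matrix `ψ(G)` is explicit: since `G` is constant on pairs of clusters and `λ₁` is close to
the common row sum of `G`, up to entries of size `O(1 / (n log n))` it is block diagonal with
entries close to `k / n`. Hence its rows and columns have `ℓ¹` norm at most `4 / 3` and its rows
have squared `ℓ²` norm at most `5k / (3n)`.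

A row of `E * ψ(G)` is a sum of independent centred vectors `E u v • ψ(G) v`. When the average
cluster size `n / k` is at least of order `log n`, these vectors are short enough for a
dimension-free Bernstein inequality in Hilbert space (Pinelis), whose engine is the bound
`𝔼 cosh ‖x + Y‖ ≤ exp (𝔼 ‖Y‖²) * cosh ‖x‖` for centred `Y` with `‖Y‖ ≤ 1`. When the clusters are
smaller, the variance term `k p log n` dominates `n p`, and it suffices to combine the Schur test
for `ψ(G)` with a Chernoff bound for `∑ v, E u v ^ 2`. In both cases a row fails with probability
at most `2 / n ^ 3`, and a union bound over the rows finishes the proof.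
-/

namespace SBM

section CoshNorm

lemma convexOn_cosh_sqrt : ConvexOn ℝ (Set.Ici 0) fun x => Real.cosh √x := by
  have hsum : ∀ x : ℝ, 0 ≤ x →
      HasSum (fun m : ℕ => x ^ m / ((2 * m).factorial : ℝ)) (Real.cosh √x) := fun x hx => by
    simpa only [pow_mul, Real.sq_sqrt hx] using Real.hasSum_cosh √x
  refine ⟨convex_Ici 0, fun x hx y hy a b ha hb hab => ?_⟩
  have hxy : 0 ≤ a • x + b • y := add_nonneg (smul_nonneg ha hx) (smul_nonneg hb hy)
  refine hasSum_le (fun m => ?_) (hsum _ hxy)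
    (((hsum x hx).const_smul a).add ((hsum y hy).const_smul b))
  have hpow := (convexOn_pow m).2 hx hy ha hb hab
  simp only [smul_eq_mul] at hpow ⊢
  rw [← mul_div_assoc, ← mul_div_assoc, ← add_div]
  gcongr

variable {H : Type*} [NormedAddCommGroup H] [InnerProductSpace ℝ H]

lemma cosh_norm_add_le (x h : H) :
    Real.cosh ‖x + h‖ ≤ Real.cosh ‖x‖ * Real.cosh ‖h‖ +
      Real.sinh ‖x‖ * Real.sinh ‖h‖ * Real.cos (InnerProductGeometry.angle x h) := by
  set c := Real.cos (InnerProductGeometry.angle x h)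
  have hsq : (1 + c) / 2 * (‖x‖ + ‖h‖) ^ 2 + (1 - c) / 2 * (‖x‖ - ‖h‖) ^ 2 = ‖x + h‖ ^ 2 := by
    rw [norm_add_sq_real, ← InnerProductGeometry.cos_angle_mul_norm_mul_norm]
    ring
  have hc0 : 0 ≤ (1 + c) / 2 := by linarith [Real.neg_one_le_cos (InnerProductGeometry.angle x h)]
  have hc1 : 0 ≤ (1 - c) / 2 := by linarith [Real.cos_le_one (InnerProductGeometry.angle x h)]
  have hconv := convexOn_cosh_sqrt.2 (sq_nonneg (‖x‖ + ‖h‖)) (sq_nonneg (‖x‖ - ‖h‖)) hc0 hc1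
    (by ring)
  simp only [smul_eq_mul, hsq, Real.sqrt_sq_eq_abs, Real.cosh_abs, Real.cosh_add,
    Real.cosh_sub] at hconv
  linarith

/-- The gradient of `x ↦ cosh ‖x‖`, which drives the one-step estimate for `𝔼 cosh ‖S + Y‖`.
At `x = 0` the convention `0 / 0 = 0` gives the correct value `0`. -/
noncomputable def coshNormGrad (x : H) : H := (Real.sinh ‖x‖ / ‖x‖) • x

lemma norm_coshNormGrad (x : H) : ‖coshNormGrad x‖ = Real.sinh ‖x‖ := by
  rcases eq_or_ne x 0 with rfl | hx
  · simp [coshNormGrad]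
  · rw [coshNormGrad, norm_smul, norm_div, norm_norm, div_mul_cancel₀ _ (norm_ne_zero_iff.2 hx),
      Real.norm_of_nonneg (Real.sinh_nonneg_iff.2 (norm_nonneg x))]

lemma inner_coshNormGrad (x h : H) :
    inner ℝ (coshNormGrad x) h =
      Real.sinh ‖x‖ * ‖h‖ * Real.cos (InnerProductGeometry.angle x h) := by
  rcases eq_or_ne x 0 with rfl | hx
  · simp [coshNormGrad]
  · have hx' := norm_ne_zero_iff.2 hx
    rw [coshNormGrad, real_inner_smul_left, ← InnerProductGeometry.cos_angle_mul_norm_mul_norm]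
    field_simp

lemma cosh_norm_add_le_of_norm_le_one (x : H) {h : H} (hh : ‖h‖ ≤ 1) :
    Real.cosh ‖x + h‖ ≤ Real.cosh ‖x‖ * (1 + ‖h‖ ^ 2) + inner ℝ (coshNormGrad x) h := by
  set c := Real.cos (InnerProductGeometry.angle x h) with hc
  have hexp : Real.cosh ‖h‖ + Real.sinh ‖h‖ - ‖h‖ ≤ 1 + ‖h‖ ^ 2 := by
    rw [Real.cosh_add_sinh]
    linarith [le_of_abs_le (Real.abs_exp_sub_one_sub_id_le (x := ‖h‖) (by rwa [abs_norm]))]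
  have hsinh : 0 ≤ Real.sinh ‖h‖ - ‖h‖ := sub_nonneg.2 (Real.self_le_sinh_iff.2 (norm_nonneg h))
  have hmain : Real.sinh ‖x‖ * c ≤ Real.cosh ‖x‖ :=
    (mul_le_of_le_one_right (Real.sinh_nonneg_iff.2 (norm_nonneg x)) (Real.cos_le_one _)).trans
      (Real.sinh_lt_cosh _).le
  calc Real.cosh ‖x + h‖
      ≤ Real.cosh ‖x‖ * Real.cosh ‖h‖ + Real.sinh ‖x‖ * Real.sinh ‖h‖ * c := cosh_norm_add_le x h
    _ = Real.cosh ‖x‖ * Real.cosh ‖h‖ + (Real.sinh ‖h‖ - ‖h‖) * (Real.sinh ‖x‖ * c) +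
          Real.sinh ‖x‖ * ‖h‖ * c := by ring
    _ ≤ Real.cosh ‖x‖ * Real.cosh ‖h‖ + (Real.sinh ‖h‖ - ‖h‖) * Real.cosh ‖x‖ +
          Real.sinh ‖x‖ * ‖h‖ * c := by gcongr
    _ = Real.cosh ‖x‖ * (Real.cosh ‖h‖ + Real.sinh ‖h‖ - ‖h‖) + Real.sinh ‖x‖ * ‖h‖ * c := by ring
    _ ≤ Real.cosh ‖x‖ * (1 + ‖h‖ ^ 2) + inner ℝ (coshNormGrad x) h := by
      rw [inner_coshNormGrad, ← hc]
      gcongr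

end CoshNorm

section VectorBernstein

variable {Ω H ι : Type*} [MeasurableSpace Ω] {P : Measure Ω} [NormedAddCommGroup H]

lemma ae_norm_sum_le_card {Y : ι → Ω → H} (hY : ∀ i, ∀ᵐ ω ∂P, ‖Y i ω‖ ≤ 1)
    (s : Finset ι) : ∀ᵐ ω ∂P, ‖∑ i ∈ s, Y i ω‖ ≤ #s := by
  filter_upwards [(Finset.eventually_all s).2 fun i _ => hY i] with ω hω
  simpa using norm_sum_le_of_le s hω

lemma measureReal_le_norm_le_exp_mul_integral_cosh [IsFiniteMeasure P] {X : Ω → H}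
    (hX : Integrable (fun ω => Real.cosh ‖X ω‖) P) (t : ℝ) :
    P.real {ω | t ≤ ‖X ω‖} ≤ 2 * Real.exp (-t) * ∫ ω, Real.cosh ‖X ω‖ ∂P := by
  have hsub : {ω | t ≤ ‖X ω‖} ⊆ {ω | Real.exp t / 2 ≤ Real.cosh ‖X ω‖} := fun ω hω => by
    have hexp : Real.exp t ≤ Real.exp ‖X ω‖ := Real.exp_le_exp.2 hω
    rw [Set.mem_ofPred_eq, Real.cosh_eq]
    linarith [Real.exp_pos (-‖X ω‖)]
  have hmarkov := mul_meas_ge_le_integral_of_nonneg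
    (ae_of_all P fun ω => (Real.cosh_pos ‖X ω‖).le) hX (Real.exp t / 2)
  calc P.real {ω | t ≤ ‖X ω‖}
      ≤ P.real {ω | Real.exp t / 2 ≤ Real.cosh ‖X ω‖} := measureReal_mono hsub
    _ = 2 * Real.exp (-t) * (Real.exp t / 2 * P.real {ω | Real.exp t / 2 ≤ Real.cosh ‖X ω‖}) := by
      rw [Real.exp_neg]
      field_simp
    _ ≤ 2 * Real.exp (-t) * ∫ ω, Real.cosh ‖X ω‖ ∂P := by gcongr

variable [MeasurableSpace H] [BorelSpace H]

lemma integrable_cosh_norm_of_norm_le [IsFiniteMeasure P] {X : Ω → H} (hX : AEMeasurable X P)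
    {C : ℝ} (hC : ∀ᵐ ω ∂P, ‖X ω‖ ≤ C) : Integrable (fun ω => Real.cosh ‖X ω‖) P := by
  refine .of_bound (C := Real.cosh C) hX.norm.cosh.aestronglyMeasurable ?_
  filter_upwards [hC] with ω hω
  rw [Real.norm_of_nonneg (Real.cosh_pos _).le]
  exact Real.cosh_le_cosh.2 (by rw [abs_norm]; exact hω.trans (le_abs_self C))

variable [InnerProductSpace ℝ H] [SecondCountableTopology H]

lemma measurable_coshNormGrad : Measurable (coshNormGrad (H := H)) := by
  unfold coshNormGrad
  fun_prop

lemma integrable_coshNormGrad_of_norm_le [IsFiniteMeasure P] {X : Ω → H} (hX : AEMeasurable X P)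
    {C : ℝ} (hC : ∀ᵐ ω ∂P, ‖X ω‖ ≤ C) : Integrable (fun ω => coshNormGrad (X ω)) P := by
  refine (integrable_cosh_norm_of_norm_le hX hC).mono
    (measurable_coshNormGrad.comp_aemeasurable hX).aestronglyMeasurable (ae_of_all _ fun ω => ?_)
  rw [norm_coshNormGrad, Real.norm_of_nonneg (Real.cosh_pos _).le]
  exact (Real.sinh_lt_cosh _).le

variable [CompleteSpace H] [IsProbabilityMeasure P]

lemma integral_cosh_norm_add_le {S Y : Ω → H} (hS : Measurable S) (hY : Measurable Y)
    (hind : IndepFun S Y P) {C : ℝ} (hSC : ∀ᵐ ω ∂P, ‖S ω‖ ≤ C) (hY1 : ∀ᵐ ω ∂P, ‖Y ω‖ ≤ 1)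
    (hY0 : ∫ ω, Y ω ∂P = 0) :
    ∫ ω, Real.cosh ‖S ω + Y ω‖ ∂P ≤
      (∫ ω, Real.cosh ‖S ω‖ ∂P) * (1 + ∫ ω, ‖Y ω‖ ^ 2 ∂P) := by
  have hcosh := integrable_cosh_norm_of_norm_le hS.aemeasurable hSC
  have hYint : Integrable Y P := .of_bound hY.aestronglyMeasurable 1 hY1
  have hYsq : Integrable (fun ω => ‖Y ω‖ ^ 2) P := by
    refine .of_bound (hY.norm.pow_const 2).aestronglyMeasurable 1 ?_
    filter_upwards [hY1] with ω hω
    rw [norm_pow, norm_norm]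
    exact pow_le_one₀ (norm_nonneg _) hω
  have hgrad := integrable_coshNormGrad_of_norm_le hS.aemeasurable hSC
  have hadd : Integrable (fun ω => Real.cosh ‖S ω + Y ω‖) P := by
    refine integrable_cosh_norm_of_norm_le (C := C + 1) (by fun_prop) ?_
    filter_upwards [hSC, hY1] with ω hω hω'
    exact (norm_add_le _ _).trans (add_le_add hω hω')
  have hone : Integrable (fun ω => 1 + ‖Y ω‖ ^ 2) P := (integrable_const 1).add hYsq
  have hind₁ : IndepFun (fun ω => Real.cosh ‖S ω‖) (fun ω => 1 + ‖Y ω‖ ^ 2) P :=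
    hind.comp (φ := fun x => Real.cosh ‖x‖) (ψ := fun y => 1 + ‖y‖ ^ 2) (by fun_prop) (by fun_prop)
  have hind₂ : IndepFun (fun ω => coshNormGrad (S ω)) Y P :=
    hind.comp measurable_coshNormGrad measurable_id
  have hint₁ : Integrable (fun ω => Real.cosh ‖S ω‖ * (1 + ‖Y ω‖ ^ 2)) P :=
    hind₁.integrable_mul hcosh hone
  have hint₂ : Integrable (fun ω => inner ℝ (coshNormGrad (S ω)) (Y ω)) P :=
    hind₂.integrable_bilin hgrad hYint (innerSL ℝ)
  have hzero : ∫ ω, inner ℝ (coshNormGrad (S ω)) (Y ω) ∂P = 0 := by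
    have hbilin := hind₂.integral_bilin hgrad hYint (innerSL ℝ)
    rwa [hY0, map_zero] at hbilin
  calc ∫ ω, Real.cosh ‖S ω + Y ω‖ ∂P
      ≤ ∫ ω, (Real.cosh ‖S ω‖ * (1 + ‖Y ω‖ ^ 2) + inner ℝ (coshNormGrad (S ω)) (Y ω)) ∂P := by
        refine integral_mono_ae hadd (hint₁.add hint₂) ?_
        filter_upwards [hY1] with ω hω using cosh_norm_add_le_of_norm_le_one _ hω
    _ = (∫ ω, Real.cosh ‖S ω‖ ∂P) * (1 + ∫ ω, ‖Y ω‖ ^ 2 ∂P) := by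
        rw [integral_add hint₁ hint₂, hzero, add_zero,
          hind₁.integral_fun_mul_eq_mul_integral hcosh.1 hone.1,
          integral_add (integrable_const 1) hYsq]
        simp

lemma integral_cosh_norm_sum_le {Y : ι → Ω → H} (hY : ∀ i, Measurable (Y i))
    (hind : iIndepFun Y P) (hY1 : ∀ i, ∀ᵐ ω ∂P, ‖Y i ω‖ ≤ 1) (hY0 : ∀ i, ∫ ω, Y i ω ∂P = 0)
    (s : Finset ι) :
    ∫ ω, Real.cosh ‖∑ i ∈ s, Y i ω‖ ∂P ≤ Real.exp (∑ i ∈ s, ∫ ω, ‖Y i ω‖ ^ 2 ∂P) := by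
  classical
  induction s using Finset.induction_on with
  | empty => simp
  | insert a s ha ih =>
    have hbound := ae_norm_sum_le_card hY1 s
    have hindS : IndepFun (fun ω => ∑ i ∈ s, Y i ω) (Y a) P := by
      simpa only [Finset.sum_apply, ← Finset.sum_fn] using
        hind.indepFun_finsetSum_of_notMem hY ha
    simp only [Finset.sum_insert ha]
    calc ∫ ω, Real.cosh ‖Y a ω + ∑ i ∈ s, Y i ω‖ ∂P
        = ∫ ω, Real.cosh ‖∑ i ∈ s, Y i ω + Y a ω‖ ∂P := by simp only [add_comm]
      _ ≤ (∫ ω, Real.cosh ‖∑ i ∈ s, Y i ω‖ ∂P) * (1 + ∫ ω, ‖Y a ω‖ ^ 2 ∂P) :=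
        integral_cosh_norm_add_le (by fun_prop) (hY a) hindS hbound (hY1 a) (hY0 a)
      _ ≤ Real.exp (∑ i ∈ s, ∫ ω, ‖Y i ω‖ ^ 2 ∂P) * Real.exp (∫ ω, ‖Y a ω‖ ^ 2 ∂P) := by
        gcongr
        rw [add_comm]
        exact Real.add_one_le_exp _
      _ = Real.exp (∫ ω, ‖Y a ω‖ ^ 2 ∂P + ∑ i ∈ s, ∫ ω, ‖Y i ω‖ ^ 2 ∂P) := by
        rw [← Real.exp_add, add_comm]

lemma measureReal_le_norm_sum_le {Y : ι → Ω → H} (hY : ∀ i, Measurable (Y i))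
    (hind : iIndepFun Y P) {l : ℝ} (hl : 0 < l) (hY1 : ∀ i, ∀ᵐ ω ∂P, l * ‖Y i ω‖ ≤ 1)
    (hY0 : ∀ i, ∫ ω, Y i ω ∂P = 0) (s : Finset ι) (t : ℝ) :
    P.real {ω | t ≤ ‖∑ i ∈ s, Y i ω‖} ≤
      2 * Real.exp (l ^ 2 * ∑ i ∈ s, ∫ ω, ‖Y i ω‖ ^ 2 ∂P - l * t) := by
  have hnorm : ∀ x : H, ‖l • x‖ = l * ‖x‖ := fun x => by rw [norm_smul, Real.norm_of_nonneg hl.le]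
  have hlY : ∀ i, Measurable fun ω => l • Y i ω := fun i => (hY i).const_smul l
  have hlY1 : ∀ i, ∀ᵐ ω ∂P, ‖l • Y i ω‖ ≤ 1 := by simpa only [hnorm] using hY1
  have hmean := integral_cosh_norm_sum_le hlY (hind.comp (fun _ x => l • x) fun _ => by fun_prop)
    hlY1 (fun i => by rw [integral_smul, hY0 i, smul_zero]) s
  have hset : {ω | t ≤ ‖∑ i ∈ s, Y i ω‖} = {ω | l * t ≤ ‖∑ i ∈ s, l • Y i ω‖} := by
    ext ω
    rw [Set.mem_ofPred_eq, Set.mem_ofPred_eq, ← Finset.smul_sum, hnorm, mul_le_mul_iff_right₀ hl]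
  calc P.real {ω | t ≤ ‖∑ i ∈ s, Y i ω‖}
      ≤ 2 * Real.exp (-(l * t)) * ∫ ω, Real.cosh ‖∑ i ∈ s, l • Y i ω‖ ∂P := by
        rw [hset]
        exact measureReal_le_norm_le_exp_mul_integral_cosh (integrable_cosh_norm_of_norm_le
          (by fun_prop) (ae_norm_sum_le_card hlY1 s)) (l * t)
    _ ≤ 2 * Real.exp (-(l * t)) * Real.exp (∑ i ∈ s, ∫ ω, ‖l • Y i ω‖ ^ 2 ∂P) := by gcongr
    _ = 2 * Real.exp (l ^ 2 * ∑ i ∈ s, ∫ ω, ‖Y i ω‖ ^ 2 ∂P - l * t) := by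
      simp only [hnorm, mul_pow, integral_const_mul, ← Finset.mul_sum]
      rw [mul_assoc, ← Real.exp_add, neg_add_eq_sub]

end VectorBernstein

section ScalarTail

variable {Ω ι : Type*} [MeasurableSpace Ω] {P : Measure Ω} [IsProbabilityMeasure P]

lemma mgf_one_le_exp_of_mem_Icc {Z : Ω → ℝ} (hZ : AEMeasurable Z P)
    (h01 : ∀ᵐ ω ∂P, Z ω ∈ Set.Icc 0 1) : mgf Z P 1 ≤ Real.exp (2 * ∫ ω, Z ω ∂P) := by
  have hint : Integrable Z P := .of_mem_Icc 0 1 hZ h01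
  calc mgf Z P 1 ≤ ∫ ω, (1 + 2 * Z ω) ∂P := by
        refine integral_mono_ae (integrable_exp_mul_of_mem_Icc hZ h01)
          ((integrable_const 1).add (hint.const_mul 2)) ?_
        filter_upwards [h01] with ω ⟨h0, h1⟩
        have hexp := le_of_abs_le (Real.abs_exp_sub_one_sub_id_le (abs_le.2 ⟨by linarith, h1⟩))
        have hsq : Z ω ^ 2 ≤ Z ω := pow_le_of_le_one h0 h1 two_ne_zero
        simp only [one_mul]
        linarith
    _ = 2 * ∫ ω, Z ω ∂P + 1 := by
        rw [integral_add (integrable_const 1) (hint.const_mul 2), integral_const_mul]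
        simp [add_comm]
    _ ≤ Real.exp (2 * ∫ ω, Z ω ∂P) := Real.add_one_le_exp _

lemma measureReal_le_sum_le_of_mem_Icc {Z : ι → Ω → ℝ} (hZ : ∀ i, Measurable (Z i))
    (hind : iIndepFun Z P) (h01 : ∀ i, ∀ᵐ ω ∂P, Z i ω ∈ Set.Icc 0 1) (s : Finset ι) (t : ℝ) :
    P.real {ω | t ≤ ∑ i ∈ s, Z i ω} ≤ Real.exp (2 * ∑ i ∈ s, ∫ ω, Z i ω ∂P - t) := by
  have hmgf : mgf (∑ i ∈ s, Z i) P 1 ≤ Real.exp (2 * ∑ i ∈ s, ∫ ω, Z i ω ∂P) := by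
    rw [hind.mgf_sum hZ, Finset.mul_sum, Real.exp_sum]
    exact Finset.prod_le_prod (fun i _ => mgf_nonneg)
      fun i _ => mgf_one_le_exp_of_mem_Icc (hZ i).aemeasurable (h01 i)
  have hchernoff := measure_ge_le_exp_mul_mgf (X := ∑ i ∈ s, Z i) t zero_le_one
    (hind.integrable_exp_mul_sum hZ fun i _ =>
      integrable_exp_mul_of_mem_Icc (hZ i).aemeasurable (h01 i))
  simp only [Finset.sum_apply, neg_mul, one_mul] at hchernoff
  calc P.real {ω | t ≤ ∑ i ∈ s, Z i ω} ≤ Real.exp (-t) * mgf (∑ i ∈ s, Z i) P 1 := hchernoff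
    _ ≤ Real.exp (-t) * Real.exp (2 * ∑ i ∈ s, ∫ ω, Z i ω ∂P) := by gcongr
    _ = Real.exp (2 * ∑ i ∈ s, ∫ ω, Z i ω ∂P - t) := by rw [← Real.exp_add, neg_add_eq_sub]

end ScalarTail

section Enorm

variable {m m' : Type*} [Fintype m]

lemma enorm_eq_norm_toLp (x : m → ℝ) : enorm x = ‖WithLp.toLp 2 x‖ := by
  simp [enorm, EuclideanSpace.norm_eq]

lemma enorm_nonneg (x : m → ℝ) : 0 ≤ enorm x := Real.sqrt_nonneg _

lemma enorm_sq (x : m → ℝ) : enorm x ^ 2 = ∑ i, x i ^ 2 :=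
  Real.sq_sqrt (Finset.sum_nonneg fun i _ => sq_nonneg (x i))

lemma enorm_vecMul_eq_norm_sum [Fintype m'] (x : m → ℝ) (A : Matrix m m' ℝ) :
    enorm (x ᵥ* A) = ‖∑ i, x i • WithLp.toLp 2 (A i)‖ := by
  rw [enorm_eq_norm_toLp, vecMul_eq_sum, WithLp.toLp_sum]
  simp only [WithLp.toLp_smul]

lemma sq_vecMul_apply_le (x : m → ℝ) (A : Matrix m m' ℝ) (j : m') :
    (x ᵥ* A) j ^ 2 ≤ (∑ i, |A i j|) * ∑ i, |A i j| * x i ^ 2 :=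
  Finset.sum_sq_le_sum_mul_sum_of_sq_le_mul univ (fun i _ => abs_nonneg (A i j))
    (fun i _ => by positivity) fun i _ => by
      rw [mul_pow, ← sq_abs (A i j), ← mul_assoc, ← sq, mul_comm]

lemma sq_enorm_vecMul_le_of_sum_abs_le [Fintype m'] (x : m → ℝ) (A : Matrix m m' ℝ) {R C : ℝ}
    (hC0 : 0 ≤ C) (hR : ∀ i, ∑ j, |A i j| ≤ R) (hC : ∀ j, ∑ i, |A i j| ≤ C) :
    enorm (x ᵥ* A) ^ 2 ≤ R * C * enorm x ^ 2 := by
  simp only [enorm_sq]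
  calc ∑ j, (x ᵥ* A) j ^ 2
      ≤ ∑ j, C * ∑ i, |A i j| * x i ^ 2 := by
        gcongr with j
        exact (sq_vecMul_apply_le x A j).trans (by gcongr; exact hC j)
    _ = C * ∑ i, (∑ j, |A i j|) * x i ^ 2 := by
        rw [← Finset.mul_sum, Finset.sum_comm]
        simp only [Finset.sum_mul]
    _ ≤ C * ∑ i, R * x i ^ 2 := by
        gcongr with i
        exact hR i
    _ = R * C * ∑ i, x i ^ 2 := by
        rw [← Finset.mul_sum]
        ring

end Enorm

section IndepNoise

variable {Ω m m' : Type*} [MeasurableSpace Ω]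

/-- A family of independent centred random variables bounded by `1` and of variance at most `p`.
Every row of the noise matrix is such a family. -/
structure IndepNoise (X : m → Ω → ℝ) (p : ℝ) (P : Measure Ω) : Prop where
  measurable (i : m) : Measurable (X i)
  iIndepFun : iIndepFun X P
  ae_abs_le_one (i : m) : ∀ᵐ ω ∂P, |X i ω| ≤ 1
  integral_eq_zero (i : m) : ∫ ω, X i ω ∂P = 0
  integral_sq_le (i : m) : ∫ ω, X i ω ^ 2 ∂P ≤ p

variable {X : m → Ω → ℝ} {p : ℝ} {P : Measure Ω} [IsProbabilityMeasure P] [Fintype m]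

lemma IndepNoise.measureReal_le_sq_enorm_le (hX : IndepNoise X p P) (t : ℝ) :
    P.real {ω | t ≤ enorm (fun i => X i ω) ^ 2} ≤ Real.exp (2 * (Fintype.card m * p) - t) := by
  have hmean : ∑ i, ∫ ω, X i ω ^ 2 ∂P ≤ Fintype.card m * p := by
    simpa using Finset.sum_le_card_nsmul univ _ p fun i _ => hX.integral_sq_le i
  have htail := measureReal_le_sum_le_of_mem_Icc (Z := fun i ω => X i ω ^ 2)
    (fun i => (hX.measurable i).pow_const 2) (hX.iIndepFun.comp (fun _ x => x ^ 2) (by fun_prop))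
    (fun i => by
      filter_upwards [hX.ae_abs_le_one i] with ω hω
      exact ⟨sq_nonneg _, (sq_le_one_iff_abs_le_one _).2 hω⟩)
    univ t
  simp only [enorm_sq]
  exact htail.trans (by gcongr)

lemma IndepNoise.measureReal_le_enorm_vecMul_le [Fintype m'] (hX : IndepNoise X p P)
    (A : Matrix m m' ℝ) {l : ℝ} (hl : 0 < l) (hA : ∀ i, l * enorm (A i) ≤ 1) (t : ℝ) :
    P.real {ω | t ≤ enorm ((fun i => X i ω) ᵥ* A)} ≤
      2 * Real.exp (l ^ 2 * (p * ∑ i, enorm (A i) ^ 2) - l * t) := by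
  set w : m → EuclideanSpace ℝ m' := fun i => WithLp.toLp 2 (A i)
  have hnorm : ∀ i ω, ‖X i ω • w i‖ = |X i ω| * enorm (A i) := fun i ω => by
    rw [norm_smul, Real.norm_eq_abs, enorm_eq_norm_toLp]
  have hvar : ∑ i, ∫ ω, ‖X i ω • w i‖ ^ 2 ∂P ≤ p * ∑ i, enorm (A i) ^ 2 := by
    simp only [hnorm, mul_pow, sq_abs, integral_mul_const, Finset.mul_sum]
    gcongr with i
    exact hX.integral_sq_le i
  have htail := measureReal_le_norm_sum_le (Y := fun i ω => X i ω • w i)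
    (fun i => (hX.measurable i).smul_const _)
    (hX.iIndepFun.comp (fun i x => x • w i) fun i => by fun_prop) hl
    (fun i => by
      filter_upwards [hX.ae_abs_le_one i] with ω hω
      rw [hnorm]
      exact (mul_le_mul_of_nonneg_left (mul_le_of_le_one_left (enorm_nonneg _) hω) hl.le).trans
        (hA i))
    (fun i => by rw [integral_smul_const, hX.integral_eq_zero i, zero_smul]) univ t
  simp only [enorm_vecMul_eq_norm_sum]
  exact htail.trans (by gcongr)

lemma IndepNoise.measureReal_le_sq_enorm_vecMul_le [Fintype m'] (hX : IndepNoise X p P)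
    (A : Matrix m m' ℝ) {R C : ℝ} (hR0 : 0 < R) (hC0 : 0 < C) (hR : ∀ i, ∑ j, |A i j| ≤ R)
    (hC : ∀ j, ∑ i, |A i j| ≤ C) (t : ℝ) :
    P.real {ω | R * C * t ≤ enorm ((fun i => X i ω) ᵥ* A) ^ 2} ≤
      Real.exp (2 * (Fintype.card m * p) - t) := by
  refine (measureReal_mono fun ω hω => ?_).trans (hX.measureReal_le_sq_enorm_le t)
  exact le_of_mul_le_mul_left
    (hω.trans (sq_enorm_vecMul_le_of_sum_abs_le _ A hC0.le hR hC)) (mul_pos hR0 hC0)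

end IndepNoise

section TwoPointLaw

variable {Ω : Type*} [MeasurableSpace Ω] {P : Measure Ω} {Y : Ω → ℝ} {g a b : ℝ}

lemma ae_eq_or_eq_of_map_eq_two_point (hY : AEMeasurable Y P)
    (hmap : P.map Y = ENNReal.ofReal g • Measure.dirac a + ENNReal.ofReal (1 - g) •
      Measure.dirac b) : ∀ᵐ ω ∂P, Y ω = a ∨ Y ω = b := by
  suffices hlaw : ∀ᵐ y ∂P.map Y, y = a ∨ y = b from ae_of_ae_map hY hlaw
  rw [hmap, ae_add_measure_iff]
  exact ⟨Measure.ae_smul_measure (by simp [ae_dirac_eq]) _,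
    Measure.ae_smul_measure (by simp [ae_dirac_eq]) _⟩

lemma integral_comp_of_map_eq_two_point (hY : AEMeasurable Y P) (hg : g ∈ Set.Icc 0 1)
    (hmap : P.map Y = ENNReal.ofReal g • Measure.dirac a + ENNReal.ofReal (1 - g) •
      Measure.dirac b) {f : ℝ → ℝ} (hf : Measurable f) :
    ∫ ω, f (Y ω) ∂P = g * f a + (1 - g) * f b := by
  have hint : ∀ r x : ℝ, Integrable f (ENNReal.ofReal r • Measure.dirac x) := fun r x =>
    (integrable_dirac (by simp)).smul_measure ENNReal.ofReal_ne_top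
  rw [← integral_map hY hf.aestronglyMeasurable, hmap, integral_add_measure (hint _ _) (hint _ _)]
  simp [ENNReal.toReal_ofReal, hg.1, hg.2]

end TwoPointLaw

section MeanMatrix

variable {n k : ℕ} {p q : ℝ} {cl : Fin n → Fin k}

lemma meanMatrix_apply (u v : Fin n) :
    meanMatrix n k p q cl u v = if cl u = cl v then p else q := rfl

lemma meanMatrix_apply_comm (u v : Fin n) :
    meanMatrix n k p q cl u v = meanMatrix n k p q cl v u := by
  simp only [meanMatrix_apply, eq_comm]

lemma meanMatrix_apply_mem_Icc (hqp : q ≤ p) (u v : Fin n) :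
    meanMatrix n k p q cl u v ∈ Set.Icc q p := by
  rw [meanMatrix_apply]
  split_ifs
  · exact Set.right_mem_Icc.2 hqp
  · exact Set.left_mem_Icc.2 hqp

end MeanMatrix

section NoiseModel

variable {Ω : Type*} [MeasureSpace Ω] {n k : ℕ} {p q : ℝ} {cl : Fin n → Fin k}
  {E : Ω → Matrix (Fin n) (Fin n) ℝ}

lemma NoiseModel.map_apply_eq (hE : NoiseModel p q cl E) (u v : Fin n) :
    (ℙ : Measure Ω).map (fun ω => E ω u v) =
      ENNReal.ofReal (meanMatrix n k p q cl u v) •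
        Measure.dirac (1 - meanMatrix n k p q cl u v) +
      ENNReal.ofReal (1 - meanMatrix n k p q cl u v) •
        Measure.dirac (-meanMatrix n k p q cl u v) := by
  obtain ⟨hsymm, -, -, hlaw⟩ := hE
  rcases le_total u v with huv | hvu
  · exact hlaw u v huv
  · simpa only [fun ω => (hsymm ω).apply u v, meanMatrix_apply_comm v u] using hlaw v u hvu

lemma NoiseModel.iIndepFun_row (hE : NoiseModel p q cl E) (u : Fin n) :
    iIndepFun (fun v ω => E ω u v) (ℙ : Measure Ω) := by
  obtain ⟨hsymm, -, hind, -⟩ := hE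
  let edge (v : Fin n) : {e : Fin n × Fin n // e.1 ≤ e.2} := ⟨(min u v, max u v), min_le_max⟩
  have hedge : Function.Injective edge := fun v w hvw => by
    simp only [edge, Subtype.mk.injEq, Prod.mk.injEq] at hvw
    grind
  have hentry : (fun v ω => E ω u v) = fun v ω => E ω (edge v).1.1 (edge v).1.2 := by
    funext v ω
    rcases le_total u v with huv | hvu
    · simp [edge, huv]
    · simp [edge, hvu, (hsymm ω).apply]
  rw [hentry]
  exact hind.precomp hedge

lemma NoiseModel.indepNoise_row (hE : NoiseModel p q cl E) (hq : 0 ≤ q) (hqp : q ≤ p)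
    (hp : p ≤ 1) (u : Fin n) : IndepNoise (fun v ω => E ω u v) p ℙ := by
  have hmeas := hE.2.1 u
  have hmap := hE.map_apply_eq u
  have hG := meanMatrix_apply_mem_Icc (cl := cl) hqp u
  have hG01 : ∀ v, meanMatrix n k p q cl u v ∈ Set.Icc 0 1 := fun v =>
    ⟨hq.trans (hG v).1, (hG v).2.trans hp⟩
  refine ⟨hmeas, hE.iIndepFun_row u, fun v => ?_, fun v => ?_, fun v => ?_⟩
  · filter_upwards [ae_eq_or_eq_of_map_eq_two_point (hmeas v).aemeasurable (hmap v)] with ω hω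
    obtain ⟨h0, h1⟩ := hG01 v
    rcases hω with hω | hω <;> rw [hω, abs_le] <;> constructor <;> linarith
  · have hmean := integral_comp_of_map_eq_two_point (hmeas v).aemeasurable (hG01 v) (hmap v)
      measurable_id
    simp only [id] at hmean
    rw [hmean]
    ring
  · rw [integral_comp_of_map_eq_two_point (hmeas v).aemeasurable (hG01 v) (hmap v)
      (f := (· ^ 2)) (by fun_prop)]
    nlinarith [(hG v).2, sq_nonneg (meanMatrix n k p q cl u v)]

end NoiseModel

section SpectralDecomp

variable {n : ℕ} {A : Matrix (Fin n) (Fin n) ℝ} {lam : Fin n → ℝ} {v : Fin n → Fin n → ℝ}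

lemma IsSpectralDecomp.mulVec_eq_sum (h : IsSpectralDecomp A lam v) (x : Fin n → ℝ) :
    A *ᵥ x = ∑ i, (lam i * (v i ⬝ᵥ x)) • v i := by
  obtain ⟨-, -, rfl⟩ := h
  simp [sum_mulVec, smul_mulVec, vecMulVec_mulVec, mul_smul]

lemma IsSpectralDecomp.sum_sq_dotProduct (h : IsSpectralDecomp A lam v) (x : Fin n → ℝ) :
    ∑ i, (v i ⬝ᵥ x) ^ 2 = x ⬝ᵥ x := by
  have horth : Matrix.of v * (Matrix.of v)ᵀ = 1 := by
    ext i j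
    rw [one_apply, ← h.2.1 i j]
    rfl
  calc ∑ i, (v i ⬝ᵥ x) ^ 2 = Matrix.of v *ᵥ x ⬝ᵥ Matrix.of v *ᵥ x :=
        Finset.sum_congr rfl fun i _ => sq _
    _ = x ⬝ᵥ ((Matrix.of v)ᵀ * Matrix.of v) *ᵥ x := by
        rw [← mulVec_mulVec, dotProduct_mulVec x, vecMul_transpose]
    _ = x ⬝ᵥ x := by rw [mul_eq_one_comm.1 horth, one_mulVec]

lemma IsSpectralDecomp.dotProduct_mulVec_le (h : IsSpectralDecomp A lam v) {i₀ : Fin n}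
    (hi₀ : IsBot i₀) (x : Fin n → ℝ) : x ⬝ᵥ A *ᵥ x ≤ lam i₀ * (x ⬝ᵥ x) := by
  calc x ⬝ᵥ A *ᵥ x = ∑ i, lam i * (v i ⬝ᵥ x) ^ 2 := by
        simp only [h.mulVec_eq_sum, dotProduct_sum, dotProduct_smul, smul_eq_mul]
        exact Finset.sum_congr rfl fun i _ => by rw [dotProduct_comm x, mul_assoc, sq]
    _ ≤ ∑ i, lam i₀ * (v i ⬝ᵥ x) ^ 2 := by
        gcongr with i
        exact h.1 (hi₀ i)
    _ = lam i₀ * (x ⬝ᵥ x) := by rw [← Finset.mul_sum, h.sum_sq_dotProduct]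

lemma IsSpectralDecomp.hasEigenvalue (h : IsSpectralDecomp A lam v) (i : Fin n) :
    Module.End.HasEigenvalue (toLin' A) (lam i) := by
  have hmul : A *ᵥ v i = lam i • v i := by simp [h.mulVec_eq_sum, h.2.1]
  refine Module.End.hasEigenvalue_of_hasEigenvector (x := v i)
    ⟨Module.End.mem_eigenspace_iff.2 (by rw [toLin'_apply, hmul]), fun hv => ?_⟩
  simpa [hv] using h.2.1 i i

lemma IsSpectralDecomp.eigenvalue_le_of_sum_abs_le (h : IsSpectralDecomp A lam v) {R : ℝ}
    (hR : ∀ u, ∑ w, |A u w| ≤ R) (i : Fin n) : lam i ≤ R := by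
  obtain ⟨u, hu⟩ := eigenvalue_mem_ball (h.hasEigenvalue i)
  rw [Metric.mem_closedBall, Real.dist_eq] at hu
  simp only [Real.norm_eq_abs] at hu
  have hsplit := Finset.add_sum_erase univ (fun w => |A u w|) (mem_univ u)
  linarith [le_of_abs_le hu, le_abs_self (A u u), hR u]

end SpectralDecomp

section MeanMatrixSums

variable {n k : ℕ} {p q : ℝ} {cl : Fin n → Fin k}

lemma meanMatrix_apply_eq_add (u v : Fin n) :
    meanMatrix n k p q cl u v = q + (p - q) * if cl u = cl v then 1 else 0 := by
  rw [meanMatrix_apply]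
  split_ifs <;> ring

lemma sum_ite_cluster_eq (i : Fin k) :
    ∑ v, (if i = cl v then (1 : ℝ) else 0) = clusterSize cl i := by
  simp [clusterSize, Finset.sum_boole, eq_comm]

lemma sum_meanMatrix_row (u : Fin n) :
    ∑ v, meanMatrix n k p q cl u v = q * n + (p - q) * clusterSize cl (cl u) := by
  simp only [meanMatrix_apply_eq_add, Finset.sum_add_distrib, ← Finset.mul_sum,
    sum_ite_cluster_eq]
  simp [mul_comm]

lemma meanMatrix_mul_self_apply (u v : Fin n) :
    (meanMatrix n k p q cl * meanMatrix n k p q cl) u v =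
      q ^ 2 * n + q * (p - q) * (clusterSize cl (cl u) + clusterSize cl (cl v)) +
        (p - q) ^ 2 * clusterSize cl (cl u) * if cl u = cl v then 1 else 0 := by
  have hterm : ∀ w, meanMatrix n k p q cl u w * meanMatrix n k p q cl w v =
      q ^ 2 + q * (p - q) * (if cl u = cl w then (1 : ℝ) else 0) +
        q * (p - q) * (if cl v = cl w then (1 : ℝ) else 0) +
        (p - q) ^ 2 * (if cl u = cl v then 1 else 0) * if cl u = cl w then (1 : ℝ) else 0 := by
    intro w
    simp only [meanMatrix_apply]
    split_ifs <;> grind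
  simp only [Matrix.mul_apply, hterm, Finset.sum_add_distrib, ← Finset.mul_sum,
    sum_ite_cluster_eq]
  simp only [sum_const, card_univ, Fintype.card_fin, nsmul_eq_mul]
  ring

lemma sum_clusterSize_eq (cl : Fin n → Fin k) : ∑ i, (clusterSize cl i : ℝ) = n := by
  simp only [← sum_ite_cluster_eq]
  rw [Finset.sum_comm]
  simp

lemma sum_clusterSize_comp_eq (cl : Fin n → Fin k) :
    ∑ u, (clusterSize cl (cl u) : ℝ) = ∑ i, (clusterSize cl i : ℝ) ^ 2 := by
  calc ∑ u, (clusterSize cl (cl u) : ℝ)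
      = ∑ u, ∑ i, (if i = cl u then (1 : ℝ) else 0) * clusterSize cl i := by simp
    _ = ∑ i, (clusterSize cl i : ℝ) ^ 2 := by
        rw [Finset.sum_comm]
        simp only [← Finset.sum_mul, sum_ite_cluster_eq, sq]

lemma sq_div_le_sum_clusterSize_comp (cl : Fin n → Fin k) :
    (n : ℝ) ^ 2 / k ≤ ∑ u, (clusterSize cl (cl u) : ℝ) := by
  rw [sum_clusterSize_comp_eq, ← sum_clusterSize_eq cl]
  refine div_le_of_le_mul₀ k.cast_nonneg (by positivity) ?_
  simpa [mul_comm] using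
    sq_sum_le_card_mul_sum_sq (s := univ) (f := fun i => (clusterSize cl i : ℝ))

lemma le_eigenvalue_meanMatrix (hqp : q ≤ p) {lam : Fin n → ℝ} {v : Fin n → Fin n → ℝ}
    (h : IsSpectralDecomp (meanMatrix n k p q cl) lam v) {i₀ : Fin n} (hi₀ : IsBot i₀) :
    q * n + (p - q) * (n / k) ≤ lam i₀ := by
  have hn : (0 : ℝ) < n := Nat.cast_pos.2 i₀.pos
  have hray := h.dotProduct_mulVec_le hi₀ 1
  have hsum : (1 : Fin n → ℝ) ⬝ᵥ meanMatrix n k p q cl *ᵥ 1 =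
      q * n * n + (p - q) * ∑ u, (clusterSize cl (cl u) : ℝ) := by
    simp only [dotProduct, mulVec, Pi.one_apply, one_mul, mul_one, sum_meanMatrix_row,
      Finset.sum_add_distrib, ← Finset.mul_sum, sum_const, card_univ, Fintype.card_fin,
      nsmul_eq_mul]
    ring
  have hsq := mul_le_mul_of_nonneg_left (sq_div_le_sum_clusterSize_comp cl) (sub_nonneg.2 hqp)
  rw [hsum] at hray
  refine le_of_mul_le_mul_right ?_ hn
  calc (q * n + (p - q) * (n / k)) * n = q * n * n + (p - q) * ((n : ℝ) ^ 2 / k) := by ring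
    _ ≤ lam i₀ * n := by simpa using (add_le_add_right hsq _).trans hray

lemma eigenvalue_meanMatrix_le (hq : 0 ≤ q) (hqp : q ≤ p) {lam : Fin n → ℝ}
    {v : Fin n → Fin n → ℝ} (h : IsSpectralDecomp (meanMatrix n k p q cl) lam v) {M : ℝ}
    (hM : ∀ i, (clusterSize cl i : ℝ) ≤ M) (i : Fin n) : lam i ≤ q * n + (p - q) * M := by
  refine h.eigenvalue_le_of_sum_abs_le (fun u => ?_) i
  calc ∑ w, |meanMatrix n k p q cl u w| = ∑ w, meanMatrix n k p q cl u w :=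
        Finset.sum_congr rfl fun w _ =>
          abs_of_nonneg (hq.trans (meanMatrix_apply_mem_Icc hqp u w).1)
    _ = q * n + (p - q) * clusterSize cl (cl u) := sum_meanMatrix_row u
    _ ≤ q * n + (p - q) * M :=
        add_le_add_right (mul_le_mul_of_nonneg_left (hM _) (sub_nonneg.2 hqp)) _

end MeanMatrixSums

section PsiMeanMatrix

variable {n k : ℕ} {p q : ℝ} {cl : Fin n → Fin k} {d δ l : ℝ}

lemma psiM_isSymm {M : Matrix (Fin n) (Fin n) ℝ} (hM : M.IsSymm) (l μ : ℝ) :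
    (psiM l μ M).IsSymm := by
  simp [Matrix.IsSymm, psiM, transpose_mul, hM.eq]

lemma meanMatrix_isSymm : (meanMatrix n k p q cl).IsSymm :=
  Matrix.IsSymm.ext fun u v => meanMatrix_apply_comm v u

lemma psiM_meanMatrix_apply (hqp : q < p) (hd : d ≠ 0) (hl : l ≠ 0) (u v : Fin n) :
    psiM l ((p - q) * d) (meanMatrix n k p q cl) u v =
      1 / d * (1 + (p - q) * (d - clusterSize cl (cl u)) / l) * (if cl u = cl v then 1 else 0) +
        q / l * ((l - q * n + (p - q) * (d - clusterSize cl (cl u) - clusterSize cl (cl v))) /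
          ((p - q) * d)) := by
  have hpq : p - q ≠ 0 := (sub_pos.2 hqp).ne'
  simp only [psiM, Matrix.add_apply, Matrix.smul_apply, meanMatrix_mul_self_apply,
    meanMatrix_apply_eq_add, smul_eq_mul]
  field_simp
  ring

lemma abs_psiM_meanMatrix_apply_le (hq : 0 ≤ q) (hqp : q < p) (hd : 0 < d)
    (hcl : ∀ i, |clusterSize cl i - d| ≤ δ * d)
    (hl : l ∈ Set.Icc (q * n + (p - q) * d) (q * n + (p - q) * ((1 + δ) * d))) (u v : Fin n) :
    |psiM l ((p - q) * d) (meanMatrix n k p q cl) u v| ≤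
      (1 + δ) / d * (if cl u = cl v then 1 else 0) + 3 * δ / n := by
  have hn : (0 : ℝ) < n := Nat.cast_pos.2 u.pos
  have hpq : 0 < p - q := sub_pos.2 hqp
  have hμ : 0 < (p - q) * d := mul_pos hpq hd
  have hδ : 0 ≤ δ := nonneg_of_mul_nonneg_left ((abs_nonneg _).trans (hcl (cl u))) hd
  have hμl : (p - q) * d ≤ l := (le_add_of_nonneg_left (by positivity)).trans hl.1
  have hl0 : 0 < l := hμ.trans_le hμl
  have hdev : ∀ i, |(p - q) * (d - clusterSize cl i)| ≤ δ * ((p - q) * d) := fun i => by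
    rw [abs_mul, abs_of_pos hpq, abs_sub_comm, mul_left_comm]
    exact mul_le_mul_of_nonneg_left (hcl i) hpq.le
  have hdiag : |1 / d * (1 + (p - q) * (d - clusterSize cl (cl u)) / l)| ≤ (1 + δ) / d := by
    rw [abs_mul, abs_of_pos (one_div_pos.2 hd), one_div_mul_eq_div]
    gcongr
    refine (abs_add_le _ _).trans (add_le_add abs_one.le ?_)
    rw [abs_div, abs_of_pos hl0, div_le_iff₀ hl0]
    exact (hdev _).trans (by gcongr)
  have hq_l : |q / l| ≤ 1 / n := by
    rw [abs_of_nonneg (by positivity), div_le_div_iff₀ hl0 hn, one_mul]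
    exact (le_add_of_nonneg_right hμ.le).trans hl.1
  have hoff : |(l - q * n + (p - q) * (d - clusterSize cl (cl u) - clusterSize cl (cl v))) /
      ((p - q) * d)| ≤ 3 * δ := by
    rw [abs_div, abs_of_pos hμ, div_le_iff₀ hμ]
    obtain ⟨hu₁, hu₂⟩ := abs_le.1 (hdev (cl u))
    obtain ⟨hv₁, hv₂⟩ := abs_le.1 (hdev (cl v))
    rw [abs_le]
    constructor <;> linarith [hl.1, hl.2]
  calc |psiM l ((p - q) * d) (meanMatrix n k p q cl) u v|
      ≤ (1 + δ) / d * (if cl u = cl v then 1 else 0) + 1 / n * (3 * δ) := by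
        rw [psiM_meanMatrix_apply hqp hd.ne' hl0.ne']
        refine (abs_add_le _ _).trans (add_le_add ?_ ?_)
        · rw [abs_mul, abs_of_nonneg (a := ite _ _ _) (by split_ifs <;> norm_num)]
          gcongr
        · rw [abs_mul]
          gcongr
    _ = (1 + δ) / d * (if cl u = cl v then 1 else 0) + 3 * δ / n := by ring

lemma sum_abs_psiM_meanMatrix_le (hq : 0 ≤ q) (hqp : q < p) (hd : 0 < d)
    (hcl : ∀ i, |clusterSize cl i - d| ≤ δ * d)
    (hl : l ∈ Set.Icc (q * n + (p - q) * d) (q * n + (p - q) * ((1 + δ) * d))) (u : Fin n) :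
    ∑ v, |psiM l ((p - q) * d) (meanMatrix n k p q cl) u v| ≤ (1 + δ) ^ 2 + 3 * δ := by
  have hn : (n : ℝ) ≠ 0 := Nat.cast_ne_zero.2 u.pos.ne'
  have hδ : 0 ≤ δ := nonneg_of_mul_nonneg_left ((abs_nonneg _).trans (hcl (cl u))) hd
  have hsize : (clusterSize cl (cl u) : ℝ) ≤ (1 + δ) * d := by
    linarith [le_of_abs_le (hcl (cl u))]
  calc ∑ v, |psiM l ((p - q) * d) (meanMatrix n k p q cl) u v|
      ≤ ∑ v, ((1 + δ) / d * (if cl u = cl v then 1 else 0) + 3 * δ / n) :=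
        Finset.sum_le_sum fun v _ => abs_psiM_meanMatrix_apply_le hq hqp hd hcl hl u v
    _ = (1 + δ) / d * clusterSize cl (cl u) + 3 * δ := by
        rw [Finset.sum_add_distrib, ← Finset.mul_sum, sum_ite_cluster_eq]
        simp [mul_div_cancel₀, hn]
    _ ≤ (1 + δ) / d * ((1 + δ) * d) + 3 * δ := by gcongr
    _ = (1 + δ) ^ 2 + 3 * δ := by field_simp

lemma sq_enorm_psiM_meanMatrix_le (hq : 0 ≤ q) (hqp : q < p) (hd : 0 < d) (hdn : d ≤ n)
    (hcl : ∀ i, |clusterSize cl i - d| ≤ δ * d)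
    (hl : l ∈ Set.Icc (q * n + (p - q) * d) (q * n + (p - q) * ((1 + δ) * d))) (u : Fin n) :
    enorm (psiM l ((p - q) * d) (meanMatrix n k p q cl) u) ^ 2 ≤
      (1 + 4 * δ) / d * ((1 + δ) ^ 2 + 3 * δ) := by
  have hδ : 0 ≤ δ := nonneg_of_mul_nonneg_left ((abs_nonneg _).trans (hcl (cl u))) hd
  set A := psiM l ((p - q) * d) (meanMatrix n k p q cl)
  have hentry : ∀ v, |A u v| ≤ (1 + 4 * δ) / d := fun v => by
    calc |A u v| ≤ (1 + δ) / d * (if cl u = cl v then 1 else 0) + 3 * δ / n :=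
          abs_psiM_meanMatrix_apply_le hq hqp hd hcl hl u v
      _ ≤ (1 + δ) / d * 1 + 3 * δ / d := by
          gcongr
          split_ifs <;> norm_num
      _ = (1 + 4 * δ) / d := by ring
  calc enorm (A u) ^ 2 = ∑ v, |A u v| * |A u v| := by
        rw [enorm_sq]
        simp only [abs_mul_abs_self, sq]
    _ ≤ ∑ v, (1 + 4 * δ) / d * |A u v| := by
        gcongr with v
        exact hentry v
    _ ≤ (1 + 4 * δ) / d * ((1 + δ) ^ 2 + 3 * δ) := by
        rw [← Finset.mul_sum]
        gcongr
        exact sum_abs_psiM_meanMatrix_le hq hqp hd hcl hl u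

end PsiMeanMatrix

section RowTail

lemma add_le_sq_sqrt_add_sqrt {a b : ℝ} (ha : 0 ≤ a) (hb : 0 ≤ b) : a + b ≤ (√a + √b) ^ 2 := by
  rw [add_sq, Real.sq_sqrt ha, Real.sq_sqrt hb]
  linarith [mul_nonneg (mul_nonneg zero_le_two (Real.sqrt_nonneg a)) (Real.sqrt_nonneg b)]

lemma sq_div_sqrt_mul_add_sqrt_mul_le {κ L : ℝ} (hκ : 0 ≤ κ) (hL : 0 < L) :
    (L / (3 * (√(κ * L) + √L))) ^ 2 * (κ + 1) ≤ L / 9 := by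
  rw [div_pow, div_mul_eq_mul_div, div_le_div_iff₀ (by positivity) (by norm_num)]
  calc L ^ 2 * (κ + 1) * 9 = 9 * L * (κ * L + L) := by ring
    _ ≤ 9 * L * (√(κ * L) + √L) ^ 2 := by
        gcongr
        exact add_le_sq_sqrt_add_sqrt (by positivity) hL.le
    _ = L * (3 * (√(κ * L) + √L)) ^ 2 := by ring

variable {Ω m m' : Type*} [MeasurableSpace Ω] {P : Measure Ω} [IsProbabilityMeasure P]
  [Fintype m] [Fintype m'] {X : m → Ω → ℝ} {p : ℝ} {A : Matrix m m' ℝ} {d L : ℝ}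

lemma IndepNoise.measureReal_le_enorm_vecMul_le_of_le (hX : IndepNoise X p P) (hp : 0 ≤ p)
    (hL : 0 < L) (hLd : L ≤ 5 * d) (hA : ∀ i, enorm (A i) ^ 2 ≤ 5 / (3 * d)) :
    P.real {ω | 10 * (√(Fintype.card m / d * p * L) + √L) ≤ enorm ((fun i => X i ω) ᵥ* A)} ≤
      2 * Real.exp (-(3 * L)) := by
  have hd : 0 < d := by linarith
  set κ := Fintype.card m / d * p with hκ
  have hκ0 : 0 ≤ κ := by positivity
  set D := √(κ * L) + √L
  have hD0 : 0 < D := add_pos_of_nonneg_of_pos (Real.sqrt_nonneg _) (Real.sqrt_pos.2 hL)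
  set l := L / (3 * D) with hl
  have hlD : l * D = L / 3 := by rw [hl, ← div_div, div_mul_cancel₀ _ hD0.ne']
  have hlsq : l ^ 2 * (κ + 1) ≤ L / 9 := sq_div_sqrt_mul_add_sqrt_mul_le hκ0 hL
  have hsmall : ∀ i, l * enorm (A i) ≤ 1 := fun i => by
    refine (sq_le_one_iff₀ (mul_nonneg (by positivity) (enorm_nonneg _))).1 ?_
    calc (l * enorm (A i)) ^ 2 ≤ L / 9 * (5 / (3 * d)) := by
          rw [mul_pow]
          gcongr
          · nlinarith [sq_nonneg l]
          · exact hA i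
      _ ≤ 1 := by
          rw [div_mul_div_comm, div_le_one (by positivity)]
          linarith
  refine (hX.measureReal_le_enorm_vecMul_le A (by positivity) hsmall _).trans ?_
  gcongr
  have hsum : p * ∑ i, enorm (A i) ^ 2 ≤ 5 / 3 * κ := by
    calc p * ∑ i, enorm (A i) ^ 2 ≤ p * (Fintype.card m * (5 / (3 * d))) := by
          gcongr
          simpa using Finset.sum_le_card_nsmul univ _ _ fun i _ => hA i
      _ = 5 / 3 * κ := by
          rw [hκ]
          field_simp
  calc l ^ 2 * (p * ∑ i, enorm (A i) ^ 2) - l * (10 * D)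
      ≤ l ^ 2 * (5 / 3 * κ) - 10 * (l * D) := by
        rw [mul_left_comm l]
        gcongr
    _ ≤ -(3 * L) := by
        rw [hlD]
        linarith [sq_nonneg l]

lemma IndepNoise.measureReal_le_enorm_vecMul_le_of_ge (hX : IndepNoise X p P) (hp : 0 ≤ p)
    (hd : 0 < d) (hdL : 5 * d ≤ L) (hR : ∀ i, ∑ j, |A i j| ≤ 4 / 3)
    (hC : ∀ j, ∑ i, |A i j| ≤ 4 / 3) :
    P.real {ω | 10 * (√(Fintype.card m / d * p * L) + √L) ≤ enorm ((fun i => X i ω) ᵥ* A)} ≤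
      2 * Real.exp (-(3 * L)) := by
  have hL : 0 < L := by linarith
  set κ := Fintype.card m / d * p with hκ
  have hκ0 : 0 ≤ κ := by positivity
  set D := √(κ * L) + √L
  have hD : κ * L + L ≤ D ^ 2 := add_le_sq_sqrt_add_sqrt (by positivity) hL.le
  have hcard : 5 * (Fintype.card m * p) ≤ κ * L := by
    have hκd : Fintype.card m * p = κ * d := by
      rw [hκ]
      field_simp
    nlinarith
  set t := 2 * (Fintype.card m * p) + 3 * L with ht
  have hsub : {ω | 10 * D ≤ enorm ((fun i => X i ω) ᵥ* A)} ⊆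
      {ω | 4 / 3 * (4 / 3) * t ≤ enorm ((fun i => X i ω) ᵥ* A) ^ 2} := fun ω hω => by
    calc 4 / 3 * (4 / 3) * t ≤ (10 * D) ^ 2 := by nlinarith
      _ ≤ enorm ((fun i => X i ω) ᵥ* A) ^ 2 :=
        pow_le_pow_left₀ (by positivity) hω 2
  calc P.real {ω | 10 * D ≤ enorm ((fun i => X i ω) ᵥ* A)}
      ≤ Real.exp (2 * (Fintype.card m * p) - t) := (measureReal_mono hsub).trans
        (hX.measureReal_le_sq_enorm_vecMul_le A (by norm_num) (by norm_num) hR hC t)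
    _ = Real.exp (-(3 * L)) := by
        rw [ht]
        ring_nf
    _ ≤ 2 * Real.exp (-(3 * L)) := by linarith [Real.exp_pos (-(3 * L))]

lemma IndepNoise.measureReal_le_enorm_vecMul_le_exp (hX : IndepNoise X p P) (hp : 0 ≤ p)
    (hd : 0 < d) (hL : 0 < L) (hR : ∀ i, ∑ j, |A i j| ≤ 4 / 3) (hC : ∀ j, ∑ i, |A i j| ≤ 4 / 3)
    (hA : ∀ i, enorm (A i) ^ 2 ≤ 5 / (3 * d)) :
    P.real {ω | 10 * (√(Fintype.card m / d * p * L) + √L) ≤ enorm ((fun i => X i ω) ᵥ* A)} ≤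
      2 * Real.exp (-(3 * L)) := by
  rcases le_total L (5 * d) with hLd | hdL
  · exact hX.measureReal_le_enorm_vecMul_le_of_le hp hL hLd hA
  · exact hX.measureReal_le_enorm_vecMul_le_of_ge hp hd hdL hR hC

end RowTail

section UnionBound

lemma one_sub_mul_le_measureReal_n2i_le {Ω : Type*} [MeasurableSpace Ω] {P : Measure Ω}
    [IsProbabilityMeasure P] {n : ℕ} {M : Ω → Matrix (Fin n) (Fin n) ℝ} {t ε : ℝ} (ht : 0 ≤ t)
    (hrow : ∀ u, P.real {ω | t ≤ enorm (M ω u)} ≤ ε) :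
    1 - n * ε ≤ P.real {ω | n2i (M ω) ≤ t} := by
  have hcover : Set.univ ⊆ {ω | n2i (M ω) ≤ t} ∪ ⋃ u, {ω | t ≤ enorm (M ω u)} := fun ω _ => by
    by_contra hω
    simp only [Set.mem_union, Set.mem_iUnion, Set.mem_ofPred_eq, not_or, not_exists, not_le] at hω
    exact hω.1.not_ge (Real.iSup_le (fun u => (hω.2 u).le) ht)
  have hunion : P.real (⋃ u, {ω | t ≤ enorm (M ω u)}) ≤ n * ε := by
    refine (measureReal_iUnion_fintype_le _).trans ?_
    simpa using Finset.sum_le_card_nsmul univ _ ε fun u _ => hrow u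
  have hone := (measureReal_mono hcover).trans (measureReal_union_le (μ := P) _ _)
  rw [probReal_univ] at hone
  linarith

end UnionBound

section Balanced

variable {n k : ℕ} {p q : ℝ} {cl : Fin n → Fin k} {lam : Fin n → ℝ} {v : Fin n → Fin n → ℝ}
  {i₀ : Fin n}

lemma Balanced.abs_clusterSize_sub_le (h : Balanced n k cl) (i : Fin k) :
    |clusterSize cl i - (n : ℝ) / k| ≤ 1 / (16 * Real.log n) * ((n : ℝ) / k) := by
  rw [abs_le]
  constructor <;> linarith [(h i).1, (h i).2]

lemma one_le_log_of_three_le (hn : 3 ≤ n) : 1 ≤ Real.log n := by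
  rw [Real.le_log_iff_exp_le (by positivity)]
  exact Real.exp_one_lt_three.le.trans (by exact_mod_cast hn)

lemma one_div_sixteen_mul_log_mem_Icc (hn : 3 ≤ n) :
    1 / (16 * Real.log n) ∈ Set.Icc 0 (1 / 16) := by
  have hlog := one_le_log_of_three_le hn
  exact ⟨by positivity, one_div_le_one_div_of_le (by norm_num) (by linarith)⟩

lemma Balanced.eigenvalue_mem_Icc (h : Balanced n k cl) (hq : 0 ≤ q) (hqp : q ≤ p)
    (hdec : IsSpectralDecomp (meanMatrix n k p q cl) lam v) (hi₀ : IsBot i₀) :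
    lam i₀ ∈ Set.Icc (q * n + (p - q) * (n / k))
      (q * n + (p - q) * ((1 + 1 / (16 * Real.log n)) * (n / k))) :=
  ⟨le_eigenvalue_meanMatrix hqp hdec hi₀,
    eigenvalue_meanMatrix_le hq hqp hdec (fun i => (h i).2) i₀⟩

lemma Balanced.sum_abs_psiM_meanMatrix_le (h : Balanced n k cl) (hn : 3 ≤ n) (hq : 0 ≤ q)
    (hqp : q < p) (hdec : IsSpectralDecomp (meanMatrix n k p q cl) lam v) (hi₀ : IsBot i₀)
    (u : Fin n) :
    ∑ w, |psiM (lam i₀) ((p - q) * (n / k)) (meanMatrix n k p q cl) u w| ≤ 4 / 3 := by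
  have hk : 0 < k := (cl u).pos
  obtain ⟨hδ0, hδ1⟩ := one_div_sixteen_mul_log_mem_Icc hn
  refine (SBM.sum_abs_psiM_meanMatrix_le hq hqp (by positivity) h.abs_clusterSize_sub_le
    (h.eigenvalue_mem_Icc hq hqp.le hdec hi₀) u).trans ?_
  nlinarith

lemma Balanced.sq_enorm_psiM_meanMatrix_le (h : Balanced n k cl) (hn : 3 ≤ n) (hq : 0 ≤ q)
    (hqp : q < p) (hdec : IsSpectralDecomp (meanMatrix n k p q cl) lam v) (hi₀ : IsBot i₀)
    (u : Fin n) :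
    enorm (psiM (lam i₀) ((p - q) * (n / k)) (meanMatrix n k p q cl) u) ^ 2 ≤
      5 / (3 * (n / k)) := by
  have hk : 0 < k := (cl u).pos
  have hd : 0 < (n : ℝ) / k := by positivity
  have hdn : (n : ℝ) / k ≤ n := div_le_self n.cast_nonneg (by exact_mod_cast hk)
  obtain ⟨hδ0, hδ1⟩ := one_div_sixteen_mul_log_mem_Icc hn
  refine (SBM.sq_enorm_psiM_meanMatrix_le hq hqp hd hdn h.abs_clusterSize_sub_le
    (h.eigenvalue_mem_Icc hq hqp.le hdec hi₀) u).trans ?_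
  rw [div_mul_eq_mul_div, div_le_div_iff₀ hd (by positivity)]
  have hconst : (1 + 4 * (1 / (16 * Real.log n))) * ((1 + 1 / (16 * Real.log n)) ^ 2 +
      3 * (1 / (16 * Real.log n))) ≤ 5 / 4 * (4 / 3) := by
    gcongr <;> nlinarith
  nlinarith

lemma NoiseModel.measureReal_le_enorm_mul_psiM_le {Ω : Type*} [MeasureSpace Ω]
    [IsProbabilityMeasure (ℙ : Measure Ω)] {E : Ω → Matrix (Fin n) (Fin n) ℝ}
    (hE : NoiseModel p q cl E) (hbal : Balanced n k cl) (hn : 3 ≤ n) (hq : 0 ≤ q) (hqp : q < p)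
    (hp : p ≤ 1) (hdec : IsSpectralDecomp (meanMatrix n k p q cl) lam v) (hi₀ : IsBot i₀)
    (u : Fin n) :
    (ℙ : Measure Ω).real {ω | 10 * (√(k * p * Real.log n) + √(Real.log n)) ≤
        enorm ((E ω * psiM (lam i₀) ((p - q) * (n / k)) (meanMatrix n k p q cl)) u)} ≤
      2 / n ^ 3 := by
  have hk : 0 < k := (cl u).pos
  have hd : 0 < (n : ℝ) / k := by positivity
  have hlog := one_le_log_of_three_le hn
  have hcard : (Fintype.card (Fin n) : ℝ) / (n / k) = k := by
    rw [Fintype.card_fin]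
    field_simp
  have hexp : Real.exp (-(3 * Real.log n)) = 1 / n ^ 3 := by
    rw [Real.exp_neg, mul_comm, Real.exp_mul, Real.exp_log (Nat.cast_pos.2 u.pos), one_div]
    norm_cast
  have hrow := hbal.sum_abs_psiM_meanMatrix_le hn hq hqp hdec hi₀
  have hcol : ∀ w, ∑ u, |psiM (lam i₀) ((p - q) * (n / k)) (meanMatrix n k p q cl) u w| ≤ 4 / 3 :=
    fun w => by simpa only [(psiM_isSymm meanMatrix_isSymm (lam i₀) _).apply] using hrow w
  have htail := (hE.indepNoise_row hq hqp.le hp u).measureReal_le_enorm_vecMul_le_exp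
    (hq.trans hqp.le) hd (zero_lt_one.trans_le hlog) hrow hcol
    (hbal.sq_enorm_psiM_meanMatrix_le hn hq hqp hdec hi₀)
  rw [hcard, hexp, mul_one_div] at htail
  exact htail

end Balanced

end SBM

open SBM in
/-- If `n ≥ 3`, `k ≥ 2` and the partition is balanced, then with
probability at least `1 − 2n^{−2}` over the choice of `E`,
`‖E·ψ(G)‖_{2→∞} ≤ 10(√(k·p·log n) + √(log n))`. -/
theorem E_mul_psi_mean_bound (n k : ℕ) (hn : 3 ≤ n) (hk : 2 ≤ k)
    (p q : ℝ) (hq : 0 ≤ q) (hpq : q < p) (hp : p ≤ 1)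
    (cl : Fin n → Fin k) (hbal : Balanced n k cl)
    (lamG : Fin n → ℝ) (vG : Fin n → Fin n → ℝ)
    (hdecG : IsSpectralDecomp (meanMatrix n k p q cl) lamG vG)
    (Ω : Type*) [MeasureSpace Ω] [IsProbabilityMeasure (ℙ : Measure Ω)]
    (E : Ω → Matrix (Fin n) (Fin n) ℝ) (hE : NoiseModel p q cl E) :
    ENNReal.ofReal (1 - 2 / (n : ℝ) ^ 2) ≤
      ℙ {ω : Ω |
        n2i (E ω * psiM (lamG ⟨0, by omega⟩) ((p - q) * ((n : ℝ) / k))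
            (meanMatrix n k p q cl)) ≤
          10 * (Real.sqrt ((k : ℝ) * p * Real.log n) + Real.sqrt (Real.log n))} := by
  have htop : IsBot (⟨0, by omega⟩ : Fin n) := fun i => Fin.mk_le_of_le_val i.val.zero_le
  have hunion := one_sub_mul_le_measureReal_n2i_le (by positivity)
    (hE.measureReal_le_enorm_mul_psiM_le hbal hn hq hpq hp hdecG htop)
  have hfail : (n : ℝ) * (2 / n ^ 3) = 2 / n ^ 2 := by field_simp
  rw [hfail] at hunion
  exact ENNReal.ofReal_le_of_le_toReal hunion
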